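/- arXiv:1804.10409 — 5 statements merged into one kernel-verified Lean document; each statement's English description precedes it below -/
import Mathlib

section
/- In every digroup (G, 1), a ⊢ 1 = 1 ⊣ a for all a ∈ G. -/
/-- A disemigroup: two associative operations `vd` (⊢) and `dv` (⊣)
satisfying the dialgebra axioms G1–G4. -/
class Disemigroup (G : Type*) where
  vd : G → G → G
  dv : G → G → G
  vd_assoc : ∀ a b c : G, vd (vd a b) c = vd a (vd b c)
  dv_assoc : ∀ a b c : G, dv (dv a b) c = dv a (dv b c)
  bar1 : ∀ a b c : G, dv a (vd b c) = dv a (dv b c)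
  bar2 : ∀ a b c : G, vd (dv a b) c = vd (vd a b) c
  bar3 : ∀ a b c : G, vd a (dv b c) = dv (vd a b) c

/-- A digroup: a disemigroup with a unit `one` and inversion `dag` (†). -/
class Digroup (G : Type*) extends Disemigroup G where
  one : G
  dag : G → G
  one_vd : ∀ a : G, vd one a = a
  dv_one : ∀ a : G, dv a one = a
  vd_dag : ∀ a : G, vd a (dag a) = one
  dag_dv : ∀ a : G, dv (dag a) a = one

open Disemigroup Digroup

theorem vd_one_eq_one_dv_general {G : Type*} [Disemigroup G] {a b e : G}
    (h_vd : vd a b = e) (h_dv : dv b a = e) : vd a e = dv e a :=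
  calc
    vd a e = vd a (dv b a) := by rw [h_dv]
    _ = dv (vd a b) a := bar3 a b a
    _ = dv e a := by rw [h_vd]

/-- In every digroup, a ⊢ 1 = 1 ⊣ a. -/
theorem vd_one_eq_one_dv {G : Type*} [Digroup G] (a : G) :
    vd a (one : G) = dv (one : G) a :=
  vd_one_eq_one_dv_general (vd_dag a) (dag_dv a)
end

section
/- In every digroup (G, 1), a† ⊢ 1 = a† and 1 ⊣ a† = a† for all a ∈ G. -/
open Disemigroup Digroup

/-! In a digroup `a†` is a right inverse of `a` only for `⊢` and a left inverse only for `⊣`. But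
the two products may be exchanged inside the left factor of a `⊢` and inside the right factor of a
`⊣`. So `a† ⊢ a` acts through `⊢` from the left as `a† ⊣ a = 1` does, and `a ⊣ a†` acts through `⊣`
from the right as `a ⊢ a† = 1` does: in these positions `a†` cancels `a`. The two claims follow on
writing `1` as `a ⊢ a†` and as `a† ⊣ a`. -/

namespace Digroup

variable {G : Type*} [Digroup G]

theorem dag_vd_cancel_left (a b : G) : vd (dag a) (vd a b) = b :=
  calc
    vd (dag a) (vd a b) = vd (vd (dag a) a) b := (vd_assoc _ _ _).symm
    _ = vd (dv (dag a) a) b := (bar2 _ _ _).symm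
    _ = vd one b := by rw [dag_dv]
    _ = b := one_vd b

theorem dv_dag_cancel_right (a b : G) : dv (dv a b) (dag b) = a :=
  calc
    dv (dv a b) (dag b) = dv a (dv b (dag b)) := dv_assoc _ _ _
    _ = dv a (vd b (dag b)) := (bar1 _ _ _).symm
    _ = dv a one := by rw [vd_dag]
    _ = a := dv_one a

end Digroup

/-- In every digroup, a† ⊢ 1 = a† and 1 ⊣ a† = a†. -/
theorem dag_vd_one_and_one_dv_dag {G : Type*} [Digroup G] (a : G) :
    vd (dag a) (one : G) = dag a ∧ dv (one : G) (dag a) = dag a := by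
  constructor
  · calc
      vd (dag a) one = vd (dag a) (vd a (dag a)) := by rw [vd_dag]
      _ = dag a := dag_vd_cancel_left a (dag a)
  · calc
      dv one (dag a) = dv (dv (dag a) a) (dag a) := by rw [dag_dv]
      _ = dag a := dv_dag_cancel_right (dag a) a
end

section
/- In every digroup (G, 1), a† ⊢ b† = a† ⊣ b† for all a, b ∈ G. -/
open Disemigroup Digroup

theorem Disemigroup.vd_eq_dv_of_vd_eq_of_dv_eq {G : Type*} [Disemigroup G] {a b e : G}
    (ha : vd a e = a) (hb : dv e b = b) : vd a b = dv a b :=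
  calc
    vd a b = vd a (dv e b) := by rw [hb]
    _ = dv (vd a e) b := bar3 a e b
    _ = dv a b := by rw [ha]

namespace Digroup

variable {G : Type*} [Digroup G]

theorem dag_vd_one (a : G) : vd (dag a) one = dag a :=
  calc
    vd (dag a) one = vd (dag a) (vd a (dag a)) := by rw [vd_dag]
    _ = vd (vd (dag a) a) (dag a) := (vd_assoc _ _ _).symm
    _ = vd (dv (dag a) a) (dag a) := (bar2 _ _ _).symm
    _ = dag a := by rw [dag_dv, one_vd]

theorem one_dv_dag (a : G) : dv one (dag a) = dag a :=
  calc
    dv one (dag a) = dv (dv (dag a) a) (dag a) := by rw [dag_dv]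
    _ = dv (dag a) (dv a (dag a)) := dv_assoc _ _ _
    _ = dv (dag a) (vd a (dag a)) := (bar1 _ _ _).symm
    _ = dag a := by rw [vd_dag, dv_one]

end Digroup

/-- In every digroup, a† ⊢ b† = a† ⊣ b†. -/
theorem dag_vd_dag_eq_dag_dv_dag {G : Type*} [Digroup G] (a b : G) :
    vd (dag a) (dag b) = dv (dag a) (dag b) :=
  vd_eq_dv_of_vd_eq_of_dv_eq (dag_vd_one a) (one_dv_dag b)
end

section
/- The quotient disemigroup Disgp⟨X^{±1} ∪ {e} | S⟩ is a digroup with unit the class of [e]_1: the class of [e]_1 is a bar-unit, and for every element a of the quotient there exists a unique b with a ⊢ b = (class of [e]_1) = b ⊣ a; explicitly, for u = x_1^{ε_1}···x_n^{ε_n} with x_i ∈ X, ε_i ∈ {−1, 0, 1} (where x^0 denotes e), the inverse of the class of [u]_m is the class of [x_n^{−ε_n}···x_1^{−ε_1}e]_{n+1}. -/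
/-- The alphabet X^{±1} ∪ {e}: letters x, x⁻¹ (for x ∈ X) and the symbol e. -/
inductive Letter (X : Type*) : Type _
  | pos : X → Letter X
  | neg : X → Letter X
  | e   : Letter X

/-- The free disemigroup on Y: an element [u]_m (u a nonempty word, 1 ≤ m ≤ |u|)
is encoded as the triple (prefix before the center, center letter, suffix),
so `⟨p, c, s⟩` stands for `[p·c·s]_{|p|+1}`. -/
structure FD (Y : Type*) where
  pre : List Y
  cen : Y
  suf : List Y

namespace FD

/-- [u]_m ⊢ [v]_n = [uv]_{|u|+n}. -/
def vd {Y : Type*} (a b : FD Y) : FD Y :=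
  ⟨a.pre ++ a.cen :: (a.suf ++ b.pre), b.cen, b.suf⟩

/-- [u]_m ⊣ [v]_n = [uv]_m. -/
def dv {Y : Type*} (a b : FD Y) : FD Y :=
  ⟨a.pre, a.cen, a.suf ++ b.pre ++ b.cen :: b.suf⟩

/-- The underlying associative word of [u]_m. -/
def word {Y : Type*} (a : FD Y) : List Y := a.pre ++ a.cen :: a.suf

end FD

/-- The congruence ρ(r) on the free disemigroup generated by a set of relations r:
the smallest equivalence relation containing r compatible with ⊢ and ⊣. -/
inductive DCongr {Y : Type*} (r : FD Y → FD Y → Prop) : FD Y → FD Y → Prop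
  | of {a b : FD Y} : r a b → DCongr r a b
  | refl (a : FD Y) : DCongr r a a
  | symm {a b : FD Y} : DCongr r a b → DCongr r b a
  | trans {a b c : FD Y} : DCongr r a b → DCongr r b c → DCongr r a c
  | vd {a b c d : FD Y} : DCongr r a b → DCongr r c d → DCongr r (a.vd c) (b.vd d)
  | dv {a b c d : FD Y} : DCongr r a b → DCongr r c d → DCongr r (a.dv c) (b.dv d)

/-- The defining relations S of the free digroup:
[xx⁻¹]₂ = [e]₁, [x⁻¹x]₁ = [e]₁, [ye]₁ = [y]₁, [ey]₂ = [y]₁. -/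
def rel (X : Type*) : FD (Letter X) → FD (Letter X) → Prop := fun a b =>
  (∃ x : X, a = ⟨[Letter.pos x], Letter.neg x, []⟩ ∧ b = ⟨[], Letter.e, []⟩) ∨
  (∃ x : X, a = ⟨[], Letter.neg x, [Letter.pos x]⟩ ∧ b = ⟨[], Letter.e, []⟩) ∨
  (∃ y : Letter X, a = ⟨[], y, [Letter.e]⟩ ∧ b = ⟨[], y, []⟩) ∨
  (∃ y : Letter X, a = ⟨[Letter.e], y, []⟩ ∧ b = ⟨[], y, []⟩)

/-- The quotient disemigroup Disgp⟨X^{±1} ∪ {e} | S⟩. -/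
def DQ (X : Type*) := Quot (DCongr (rel X))

/-- The class of an element of the free disemigroup in the quotient. -/
def cls {X : Type*} (a : FD (Letter X)) : DQ X := Quot.mk _ a

/-- The operation ⊢ on the quotient. -/
def DQ.vd {X : Type*} : DQ X → DQ X → DQ X :=
  Quot.map₂ FD.vd (fun a _ _ h => DCongr.vd (DCongr.refl a) h)
    (fun _ _ b h => DCongr.vd h (DCongr.refl b))

/-- The operation ⊣ on the quotient. -/
def DQ.dv {X : Type*} : DQ X → DQ X → DQ X :=
  Quot.map₂ FD.dv (fun a _ _ h => DCongr.dv (DCongr.refl a) h)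
    (fun _ _ b h => DCongr.dv h (DCongr.refl b))

/-- The class of [e]₁, the unit of the free digroup. -/
def unitE (X : Type*) : DQ X := cls ⟨[], Letter.e, []⟩

/-- Words over X^{±1} are lists of pairs (x, b), where (x, true) is x and
(x, false) is x⁻¹, as for `FreeGroup`. This converts such a pair to a `Letter`. -/
def pm {X : Type*} (p : X × Bool) : Letter X :=
  if p.2 then Letter.pos p.1 else Letter.neg p.1

/-- A word over X^{±1} is reduced (lies in gp⟨X⟩) if it has no adjacent pair
of mutually inverse letters. -/
def Reduced {X : Type*} (L : List (X × Bool)) : Prop :=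
  List.Chain' (fun a b => ¬(a.1 = b.1 ∧ a.2 = !b.2)) L

/-- Delete all occurrences of e from a word over X^{±1} ∪ {e} (the map τ). -/
def strip {X : Type*} (L : List (Letter X)) : List (X × Bool) :=
  L.flatMap fun l => match l with
    | Letter.pos x => [(x, true)]
    | Letter.neg x => [(x, false)]
    | Letter.e => []

/-- ŵ: the reduced word of w, obtained by deleting the e's and freely reducing. -/
noncomputable def hat {X : Type*} (L : List (Letter X)) : List (X × Bool) :=
  letI := Classical.decEq X
  FreeGroup.reduce (strip L)

/-- λ(w): the (1-based) position of the first letter of w lying in X⁻¹. -/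
def lam {X : Type*} (L : List (X × Bool)) : ℕ := L.findIdx (fun p => !p.2) + 1

/-- The element [L]_m of the free disemigroup determined by a word L over X^{±1}
and a center position m. -/
def toNF {X : Type*} (L : List (X × Bool)) (m : ℕ) : FD (Letter X) :=
  ⟨(L.take (m - 1)).map pm, ((L[m-1]?).map pm).getD Letter.e, (L.drop m).map pm⟩

/-- Ω_e = {[eu]₁ : u ∈ X*}. -/
def OmegaE (X : Type*) : Set (FD (Letter X)) :=
  {a | ∃ u : List X, a = ⟨[], Letter.e, u.map Letter.pos⟩}

/-- Ω_X = {[uxv]_{|u|+1} : x ∈ X, u, v ∈ gp⟨X⟩}. -/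
def OmegaX (X : Type*) : Set (FD (Letter X)) :=
  {a | ∃ (x : X) (u v : List (X × Bool)), Reduced u ∧ Reduced v ∧
    a = ⟨u.map pm, Letter.pos x, v.map pm⟩}

/-- Ω_{X⁻¹} = {[ux⁻¹v]_{|u|+1} : x ∈ X, u ∈ X*, v ∈ (X^{±1})*, ux⁻¹v reduced}. -/
def OmegaInv (X : Type*) : Set (FD (Letter X)) :=
  {a | ∃ (x : X) (u : List X) (v : List (X × Bool)),
    Reduced ((u.map fun y => (y, true)) ++ (x, false) :: v) ∧
    a = ⟨u.map Letter.pos, Letter.neg x, v.map pm⟩}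

/-- Inversion of a single letter. -/
def linv {X : Type*} : Letter X → Letter X
  | Letter.pos x => Letter.neg x
  | Letter.neg x => Letter.pos x
  | Letter.e => Letter.e

/-- The formal inverse w⁻¹ of a word over X^{±1}. -/
def invw {X : Type*} (L : List (X × Bool)) : List (X × Bool) :=
  L.reverse.map fun p => (p.1, !p.2)

/-!
In a disemigroup with bar-unit `e`, the elements that have an inverse are closed under both
operations: if `b`, `b'` are inverses of `a`, `a'`, then `b' ⊢ b` is an inverse of both `a ⊢ a'` and
`a ⊣ a'`, because `b' ⊢ e = b'`. Likewise, if `b` is an inverse of `a`, then `a ⊢ e` is an inverse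
of `b`. So a disemigroup generated by invertible elements is a digroup. In `DQ X` the relations make
`x⁻¹` an inverse of `x`, hence `x ⊢ e` an inverse of `x⁻¹`, and `e` is a bar-unit because the
relations say that it acts as one on the generators.
-/

/-- Disemigroups: sets with associative operations `vd`, written ⊢, and `dv`, written ⊣, linked by
three mixed associativity laws. -/
class Disemigroup_s8 (D : Type*) where
  vd : D → D → D
  dv : D → D → D
  vd_assoc (a b c : D) : vd (vd a b) c = vd a (vd b c)
  dv_assoc (a b c : D) : dv (dv a b) c = dv a (dv b c)
  vd_dv_assoc (a b c : D) : dv (vd a b) c = vd a (dv b c)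
  dv_vd_left (a b c : D) : vd (dv a b) c = vd (vd a b) c
  dv_vd_right (a b c : D) : dv a (vd b c) = dv a (dv b c)

-- The superscript avoids a clash with Mathlib's `⊣` for adjunctions.
infixl:70 " ⊢ᵈ " => Disemigroup_s8.vd
infixl:70 " ⊣ᵈ " => Disemigroup_s8.dv

namespace Disemigroup_s8

variable {D : Type*} [Disemigroup_s8 D]

/-- Bar-units of a disemigroup: elements that are neutral as a left factor of ⊢ and as a right
factor of ⊣. -/
structure IsBarUnit (e : D) : Prop where
  vd (a : D) : e ⊢ᵈ a = a
  dv (a : D) : a ⊣ᵈ e = a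

/-- `IsInverse e a b`: the element `b` is an inverse of `a` with respect to the bar-unit `e`.
The relation is not symmetric in `a` and `b`. -/
structure IsInverse (e a b : D) : Prop where
  vd : a ⊢ᵈ b = e
  dv : b ⊣ᵈ a = e

variable {e a a' b b' c : D}

theorem IsBarUnit.isInverse_self (he : IsBarUnit e) : IsInverse e e e :=
  ⟨he.vd e, he.dv e⟩

theorem IsBarUnit.eq_vd_of_vd_eq_of_dv_eq (he : IsBarUnit e) (hb : a ⊢ᵈ b = e)
    (hc : c ⊣ᵈ a = e) : b = c ⊢ᵈ e :=
  calc
    b = (c ⊣ᵈ a) ⊢ᵈ b := by rw [hc, he.vd]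
    _ = c ⊢ᵈ (a ⊢ᵈ b) := by rw [dv_vd_left, vd_assoc]
    _ = c ⊢ᵈ e := by rw [hb]

namespace IsInverse

theorem vd_unit (he : IsBarUnit e) (h : IsInverse e a b) : b ⊢ᵈ e = b :=
  (he.eq_vd_of_vd_eq_of_dv_eq h.vd h.dv).symm

theorem unit_dv (he : IsBarUnit e) (h : IsInverse e a b) : e ⊣ᵈ b = b :=
  calc
    e ⊣ᵈ b = b ⊣ᵈ (a ⊣ᵈ b) := by rw [← h.dv, dv_assoc]
    _ = b ⊣ᵈ (a ⊢ᵈ b) := (dv_vd_right b a b).symm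
    _ = b := by rw [h.vd, he.dv]

theorem unique (he : IsBarUnit e) (h : IsInverse e a b) (h' : IsInverse e a b') : b = b' :=
  (he.eq_vd_of_vd_eq_of_dv_eq h.vd h'.dv).trans (h'.vd_unit he)

theorem inverse_vd_unit (he : IsBarUnit e) (h : IsInverse e a b) : IsInverse e b (a ⊢ᵈ e) where
  vd := by rw [← vd_assoc, ← dv_vd_left, h.dv, he.vd]
  dv := by rw [vd_dv_assoc, h.unit_dv he, h.vd]

theorem vd_vd (he : IsBarUnit e) (h : IsInverse e a b) (h' : IsInverse e a' b') :
    IsInverse e (a ⊢ᵈ a') (b' ⊢ᵈ b) where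
  vd := by rw [vd_assoc, ← vd_assoc a', h'.vd, he.vd, h.vd]
  dv :=
    calc
      (b' ⊢ᵈ b) ⊣ᵈ (a ⊢ᵈ a') = b' ⊢ᵈ ((b ⊣ᵈ a) ⊣ᵈ a') := by
        rw [dv_vd_right, vd_dv_assoc, dv_assoc]
      _ = (b' ⊢ᵈ e) ⊣ᵈ a' := by rw [h.dv, vd_dv_assoc]
      _ = e := by rw [h'.vd_unit he, h'.dv]

theorem dv_of_vd (h : IsInverse e (a ⊢ᵈ a') b) : IsInverse e (a ⊣ᵈ a') b where
  vd := by rw [dv_vd_left, h.vd]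
  dv := by rw [← dv_vd_right, h.dv]

end IsInverse

end Disemigroup_s8

namespace FD

variable {Y : Type*}

instance : Disemigroup_s8 (FD Y) where
  vd := vd
  dv := dv
  vd_assoc a b c := by simp [vd]
  dv_assoc a b c := by simp [dv]
  vd_dv_assoc _ _ _ := rfl
  dv_vd_left a b c := by simp [vd, dv]
  dv_vd_right a b c := by simp [vd, dv]

/-- The generator `[y]₁` of the free disemigroup. -/
def of (y : Y) : FD Y := ⟨[], y, []⟩

@[elab_as_elim]
theorem induction {motive : FD Y → Prop} (of : ∀ y, motive (of y))
    (vd : ∀ a b, motive a → motive b → motive (a ⊢ᵈ b))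
    (dv : ∀ a b, motive a → motive b → motive (a ⊣ᵈ b)) (a : FD Y) : motive a := by
  obtain ⟨p, c, s⟩ := a
  induction p with
  | cons y p ih => exact vd _ _ (of y) ih
  | nil =>
    induction s using List.reverseRecOn with
    | nil => exact of c
    | append_singleton s y ih =>
      have h : (⟨[], c, s ++ [y]⟩ : FD Y) = ⟨[], c, s⟩ ⊣ᵈ FD.of y :=
        congrArg (fun t => FD.mk [] c (t ++ [y])) (List.append_nil s).symm
      exact h ▸ dv _ _ ih (of y)

theorem word_vd (a b : FD Y) : (a ⊢ᵈ b).word = a.word ++ b.word := by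
  change (a.vd b).word = _
  simp [vd, word]

theorem word_dv (a b : FD Y) : (a ⊣ᵈ b).word = a.word ++ b.word := by
  change (a.dv b).word = _
  simp [dv, word]

/-- The representative `[x_n^{−ε_n}···x₁^{−ε₁}e]_{n+1}` of the inverse of the class of `[u]_m`,
where `u = x₁^{ε₁}···x_n^{ε_n}`. -/
def formalInv {X : Type*} (a : FD (Letter X)) : FD (Letter X) :=
  ⟨a.word.reverse.map linv, .e, []⟩

end FD

namespace DQ

open Disemigroup_s8

variable {X : Type*}

instance : Disemigroup_s8 (DQ X) where
  vd := vd
  dv := dv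
  vd_assoc := by rintro ⟨a⟩ ⟨b⟩ ⟨c⟩; exact congrArg cls (vd_assoc a b c)
  dv_assoc := by rintro ⟨a⟩ ⟨b⟩ ⟨c⟩; exact congrArg cls (dv_assoc a b c)
  vd_dv_assoc := by rintro ⟨a⟩ ⟨b⟩ ⟨c⟩; exact congrArg cls (vd_dv_assoc a b c)
  dv_vd_left := by rintro ⟨a⟩ ⟨b⟩ ⟨c⟩; exact congrArg cls (dv_vd_left a b c)
  dv_vd_right := by rintro ⟨a⟩ ⟨b⟩ ⟨c⟩; exact congrArg cls (dv_vd_right a b c)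

theorem cls_eq_of_rel {a b : FD (Letter X)} (h : rel X a b) : cls a = cls b :=
  Quot.sound (.of h)

/-- The class of the one-letter word `y`. -/
def gen (y : Letter X) : DQ X := cls (.of y)

@[elab_as_elim]
theorem induction {motive : DQ X → Prop} (gen : ∀ y, motive (gen y))
    (vd : ∀ a b, motive a → motive b → motive (a ⊢ᵈ b))
    (dv : ∀ a b, motive a → motive b → motive (a ⊣ᵈ b)) (a : DQ X) : motive a := by
  obtain ⟨a⟩ := a
  exact FD.induction (motive := fun a => motive (cls a)) gen
    (fun _ _ => vd _ _) (fun _ _ => dv _ _) a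

theorem isBarUnit_unitE : IsBarUnit (unitE X) where
  vd a := by
    induction a using DQ.induction with
    | gen y => exact cls_eq_of_rel (.inr (.inr (.inr ⟨y, rfl, rfl⟩)))
    | vd a b ha _ => rw [← vd_assoc, ha]
    | dv a b ha _ => rw [← vd_dv_assoc, ha]
  dv a := by
    induction a using DQ.induction with
    | gen y => exact cls_eq_of_rel (.inr (.inr (.inl ⟨y, rfl, rfl⟩)))
    | vd a b _ hb => rw [vd_dv_assoc, hb]
    | dv a b _ hb => rw [dv_assoc, hb]

theorem isInverse_gen_pos (x : X) : IsInverse (unitE X) (gen (.pos x)) (gen (.neg x)) where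
  vd := cls_eq_of_rel (.inl ⟨x, rfl, rfl⟩)
  dv := cls_eq_of_rel (.inr (.inl ⟨x, rfl, rfl⟩))

theorem isInverse_gen (y : Letter X) :
    IsInverse (unitE X) (gen y) (gen (linv y) ⊢ᵈ unitE X) := by
  have he := isBarUnit_unitE (X := X)
  cases y with
  | pos x =>
    have h := isInverse_gen_pos x
    exact (h.vd_unit he).symm ▸ h
  | neg x => exact (isInverse_gen_pos x).inverse_vd_unit he
  | e => exact (he.vd (unitE X)).symm ▸ he.isInverse_self

theorem cls_append_e_cons (p q : List (Letter X)) (c : Letter X) (s : List (Letter X)) :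
    cls ⟨p ++ .e :: q, c, s⟩ = cls ⟨p ++ q, c, s⟩ := by
  induction p with
  | nil => exact isBarUnit_unitE.vd (cls ⟨q, c, s⟩)
  | cons y p ih => exact congrArg (gen y ⊢ᵈ ·) ih

theorem cls_formalInv_vd (a b : FD (Letter X)) :
    cls (a ⊢ᵈ b).formalInv = cls b.formalInv ⊢ᵈ cls a.formalInv :=
  calc
    cls (a ⊢ᵈ b).formalInv =
        cls ⟨b.word.reverse.map linv ++ a.word.reverse.map linv, .e, []⟩ := by
      rw [FD.formalInv, FD.word_vd, List.reverse_append, List.map_append]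
    _ = cls b.formalInv ⊢ᵈ cls a.formalInv := (cls_append_e_cons _ _ _ _).symm

theorem isInverse_formalInv (a : FD (Letter X)) :
    IsInverse (unitE X) (cls a) (cls a.formalInv) := by
  have inverse_vd (a b : FD (Letter X)) (ha : IsInverse (unitE X) (cls a) (cls a.formalInv))
      (hb : IsInverse (unitE X) (cls b) (cls b.formalInv)) :
      IsInverse (unitE X) (cls a ⊢ᵈ cls b) (cls (a ⊢ᵈ b).formalInv) :=
    cls_formalInv_vd a b ▸ ha.vd_vd isBarUnit_unitE hb
  induction a using FD.induction with
  | of y => exact isInverse_gen y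
  | vd a b ha hb => exact inverse_vd a b ha hb
  | dv a b ha hb =>
    have h : (a ⊣ᵈ b).formalInv = (a ⊢ᵈ b).formalInv := by
      rw [FD.formalInv, FD.formalInv, FD.word_dv, FD.word_vd]
    exact h ▸ (inverse_vd a b ha hb).dv_of_vd

end DQ

/-- Disgp⟨X^{±1} ∪ {e} | S⟩ is a digroup with unit the class of [e]₁:
the class of [e]₁ is a bar-unit, every element has a unique two-sided
inverse, and the inverse of the class of [u]_m, where u = x₁^{ε₁}···x_n^{ε_n},
is the class of [x_n^{−ε_n}···x₁^{−ε₁}e]_{n+1}. -/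
theorem DQ_is_digroup (X : Type*) :
    (∀ a : DQ X, DQ.vd (unitE X) a = a ∧ DQ.dv a (unitE X) = a) ∧
    (∀ a : DQ X, ∃! b : DQ X, DQ.vd a b = unitE X ∧ DQ.dv b a = unitE X) ∧
    (∀ a : FD (Letter X),
      DQ.vd (cls a) (cls ⟨a.word.reverse.map linv, Letter.e, []⟩) = unitE X ∧
      DQ.dv (cls ⟨a.word.reverse.map linv, Letter.e, []⟩) (cls a) = unitE X) := by
  have inverse (a : FD (Letter X)) := DQ.isInverse_formalInv a
  refine ⟨fun a => ⟨DQ.isBarUnit_unitE.vd a, DQ.isBarUnit_unitE.dv a⟩, ?_,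
    fun a => ⟨(inverse a).vd, (inverse a).dv⟩⟩
  rintro ⟨a⟩
  refine ⟨cls a.formalInv, ⟨(inverse a).vd, (inverse a).dv⟩, fun b hb => ?_⟩
  exact Disemigroup_s8.IsInverse.unique DQ.isBarUnit_unitE ⟨hb.1, hb.2⟩ (inverse a)
end

section
/- In Disgp⟨X^{±1} ∪ {e} | S⟩, for every normal form [q]_n ∈ Ω_e ∪ Ω_X ∪ Ω_{X⁻¹} and every [uxv]_{|u|+1} ∈ Ω_X: (class of [q]_n) ⊢ (class of [uxv]_{|u|+1}) = class of [(q̂u) x v]_{|q̂u|+1}, where q̂u denotes the reduced word obtained from the concatenation of q̂ and u; and (class of [uxv]_{|u|+1}) ⊣ (class of [q]_n) = class of [u x (v̂q)]_{|u|+1}, where v̂q denotes the reduced word obtained from the concatenation of v and q̂. In particular both products again lie in the image of Ω_X. -/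
/-!
Multiplying a relation `a ρ(S) b` by a letter forgets the centers of `a` and `b`: their words become
interchangeable beside that letter, and, multiplying further, in every position off the center.
So off the center `xx⁻¹` and `x⁻¹x` may be replaced by `e`, and `[ey]₂ = [y]₁ = [ye]₁` lets every
`e` there be deleted. Hence the words on both sides of the center can be freely reduced.
-/

namespace FD

variable {Y : Type*} (a b : FD Y)

theorem vd_eq_word_append : a.vd b = ⟨a.word ++ b.pre, b.cen, b.suf⟩ := by
  simp only [vd, word, List.append_assoc, List.cons_append]

theorem dv_eq_append_word : a.dv b = ⟨a.pre, a.cen, a.suf ++ b.word⟩ := by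
  simp only [dv, word, List.append_assoc]

end FD

namespace DCongr

variable {Y : Type*} {r : FD Y → FD Y → Prop} {a b : FD Y}

theorem prepend (h : DCongr r a b) (p : List Y) :
    DCongr r ⟨p ++ a.pre, a.cen, a.suf⟩ ⟨p ++ b.pre, b.cen, b.suf⟩ := by
  cases p with
  | nil => exact h
  | cons y p => exact .vd (.refl ⟨[], y, p⟩) h

theorem append (h : DCongr r a b) (s : List Y) :
    DCongr r ⟨a.pre, a.cen, a.suf ++ s⟩ ⟨b.pre, b.cen, b.suf ++ s⟩ := by
  cases s with
  | nil => simpa only [List.append_nil] using h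
  | cons y s => simpa only [FD.dv, List.append_nil] using h.dv (.refl ⟨[], y, s⟩)

end DCongr

/-- The words `w` and `w'` are interchangeable modulo `ρ(r)` off the center. Only `[wc]`, `[cw]`
with center a letter `c` are tested: multiplication extends this to all words around `c`. -/
def OffCenterEquiv {Y : Type*} (r : FD Y → FD Y → Prop) (w w' : List Y) : Prop :=
  ∀ c, DCongr r ⟨w, c, []⟩ ⟨w', c, []⟩ ∧ DCongr r ⟨[], c, w⟩ ⟨[], c, w'⟩

namespace OffCenterEquiv

variable {Y : Type*} {r : FD Y → FD Y → Prop} {w w' w'' : List Y}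

theorem refl (w : List Y) : OffCenterEquiv r w w := fun _ => ⟨.refl _, .refl _⟩

theorem trans (h : OffCenterEquiv r w w') (h' : OffCenterEquiv r w' w'') :
    OffCenterEquiv r w w'' :=
  fun c => ⟨(h c).1.trans (h' c).1, (h c).2.trans (h' c).2⟩

theorem append_left (h : OffCenterEquiv r w w') (u : List Y) :
    OffCenterEquiv r (u ++ w) (u ++ w') := by
  refine fun c => ⟨(h c).1.prepend u, ?_⟩
  obtain rfl | ⟨t, y, rfl⟩ := u.eq_nil_or_concat
  · exact (h c).2
  · simpa [FD.dv] using DCongr.dv (.refl ⟨[], c, t⟩) (h y).2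

theorem append_right (h : OffCenterEquiv r w w') (u : List Y) :
    OffCenterEquiv r (w ++ u) (w' ++ u) := by
  refine fun c => ⟨?_, (h c).2.append u⟩
  cases u with
  | nil => simpa only [List.append_nil] using (h c).1
  | cons y t => exact (h y).1.vd (.refl ⟨t, c, []⟩)

theorem dcongr_pre (h : OffCenterEquiv r w w') (c : Y) (s : List Y) :
    DCongr r ⟨w, c, s⟩ ⟨w', c, s⟩ :=
  (h c).1.append s

theorem dcongr_suf (h : OffCenterEquiv r w w') (p : List Y) (c : Y) :
    DCongr r ⟨p, c, w⟩ ⟨p, c, w'⟩ := by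
  simpa only [List.append_nil] using (h c).2.prepend p

end OffCenterEquiv

theorem DCongr.offCenterEquiv_word {Y : Type*} {r : FD Y → FD Y → Prop} {a b : FD Y}
    (h : DCongr r a b) : OffCenterEquiv r a.word b.word := by
  intro c
  have letter_right := h.vd (.refl ⟨[], c, []⟩)
  have letter_left := (DCongr.refl ⟨[], c, []⟩).dv h
  simp only [FD.vd_eq_word_append, FD.dv_eq_append_word, List.append_nil, List.nil_append]
    at letter_right letter_left
  exact ⟨letter_right, letter_left⟩

section FreeDigroup

variable {X : Type*}

theorem offCenterEquiv_e_nil : OffCenterEquiv (rel X) [Letter.e] [] := fun c =>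
  ⟨.of (.inr (.inr (.inr ⟨c, rfl, rfl⟩))), .of (.inr (.inr (.inl ⟨c, rfl, rfl⟩)))⟩

theorem offCenterEquiv_inverse_pair_e (x : X) (b : Bool) :
    OffCenterEquiv (rel X) [pm (x, b), pm (x, !b)] [Letter.e] := by
  cases b with
  | true =>
    have h : rel X ⟨[.pos x], .neg x, []⟩ ⟨[], .e, []⟩ := .inl ⟨x, rfl, rfl⟩
    exact (DCongr.of h).offCenterEquiv_word
  | false =>
    have h : rel X ⟨[], .neg x, [.pos x]⟩ ⟨[], .e, []⟩ := .inr (.inl ⟨x, rfl, rfl⟩)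
    exact (DCongr.of h).offCenterEquiv_word

theorem offCenterEquiv_of_step {L M : List (X × Bool)} (h : FreeGroup.Red.Step L M) :
    OffCenterEquiv (rel X) (L.map pm) (M.map pm) := by
  obtain @⟨L₁, L₂, x, b⟩ := h
  have cancel := (offCenterEquiv_inverse_pair_e x b).trans offCenterEquiv_e_nil
  simpa using (cancel.append_right (L₂.map pm)).append_left (L₁.map pm)

theorem offCenterEquiv_of_red {L M : List (X × Bool)} (h : FreeGroup.Red L M) :
    OffCenterEquiv (rel X) (L.map pm) (M.map pm) := by
  induction h with
  | refl => exact .refl _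
  | tail _ step ih => exact ih.trans (offCenterEquiv_of_step step)

theorem offCenterEquiv_strip (w : List (Letter X)) :
    OffCenterEquiv (rel X) w ((strip w).map pm) := by
  induction w with
  | nil => exact .refl _
  | cons y w ih =>
    cases y with
    | pos x => exact ih.append_left [Letter.pos x]
    | neg x => exact ih.append_left [Letter.neg x]
    | e => exact (offCenterEquiv_e_nil.append_right w).trans ih

theorem red_strip_hat (w : List (Letter X)) : FreeGroup.Red (strip w) (hat w) :=
  letI := Classical.decEq X
  FreeGroup.reduce.red

theorem offCenterEquiv_hat (w : List (Letter X)) : OffCenterEquiv (rel X) w ((hat w).map pm) :=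
  (offCenterEquiv_strip w).trans (offCenterEquiv_of_red (red_strip_hat w))

theorem reduced_of_isReduced {L : List (X × Bool)} (h : FreeGroup.IsReduced L) : Reduced L :=
  h.imp fun _ _ hab => by simpa using hab

theorem reduced_hat (w : List (Letter X)) : Reduced (hat w) :=
  letI := Classical.decEq X
  reduced_of_isReduced (FreeGroup.isReduced_iff_reduce_eq.mpr FreeGroup.reduce.idem)

theorem vd_cls_eq_cls_hat (a b : FD (Letter X)) :
    (cls a).vd (cls b) = cls ⟨(hat (a.word ++ b.pre)).map pm, b.cen, b.suf⟩ :=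
  calc
    (cls a).vd (cls b) = cls (a.vd b) := rfl
    _ = cls ⟨a.word ++ b.pre, b.cen, b.suf⟩ := by rw [FD.vd_eq_word_append]
    _ = cls ⟨(hat (a.word ++ b.pre)).map pm, b.cen, b.suf⟩ :=
      Quot.sound ((offCenterEquiv_hat _).dcongr_pre _ _)

theorem dv_cls_eq_cls_hat (a b : FD (Letter X)) :
    (cls a).dv (cls b) = cls ⟨a.pre, a.cen, (hat (a.suf ++ b.word)).map pm⟩ :=
  calc
    (cls a).dv (cls b) = cls (a.dv b) := rfl
    _ = cls ⟨a.pre, a.cen, a.suf ++ b.word⟩ := by rw [FD.dv_eq_append_word]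
    _ = cls ⟨a.pre, a.cen, (hat (a.suf ++ b.word)).map pm⟩ :=
      Quot.sound ((offCenterEquiv_hat _).dcongr_suf _ _)

theorem mul_with_OmegaX_general (q : FD (Letter X)) (x : X) (u v : List (X × Bool))
    (hu : Reduced u) (hv : Reduced v) :
    DQ.vd (cls q) (cls ⟨u.map pm, Letter.pos x, v.map pm⟩) =
      cls ⟨(hat (q.word ++ u.map pm)).map pm, Letter.pos x, v.map pm⟩ ∧
    DQ.dv (cls ⟨u.map pm, Letter.pos x, v.map pm⟩) (cls q) =
      cls ⟨u.map pm, Letter.pos x, (hat (v.map pm ++ q.word)).map pm⟩ ∧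
    (⟨(hat (q.word ++ u.map pm)).map pm, Letter.pos x, v.map pm⟩ : FD (Letter X)) ∈
      OmegaX X ∧
    (⟨u.map pm, Letter.pos x, (hat (v.map pm ++ q.word)).map pm⟩ : FD (Letter X)) ∈
      OmegaX X :=
  ⟨vd_cls_eq_cls_hat _ _, dv_cls_eq_cls_hat _ _,
    ⟨x, _, v, reduced_hat _, hv, rfl⟩, ⟨x, u, _, hu, reduced_hat _, rfl⟩⟩

end FreeDigroup

/-- Multiplication by an element of Ω_X: for any normal form [q]_n and any
[uxv]_{|u|+1} ∈ Ω_X, [q]_n ⊢ [uxv]_{|u|+1} = [(q̂u)xv]_{|q̂u|+1} and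
[uxv]_{|u|+1} ⊣ [q]_n = [ux(v̂q)]_{|u|+1}; in particular both products again
lie in the image of Ω_X. -/
theorem mul_with_OmegaX (X : Type*) (q : FD (Letter X))
    (hq : q ∈ OmegaE X ∪ OmegaX X ∪ OmegaInv X)
    (x : X) (u v : List (X × Bool)) (hu : Reduced u) (hv : Reduced v) :
    DQ.vd (cls q) (cls ⟨u.map pm, Letter.pos x, v.map pm⟩) =
      cls ⟨(hat (q.word ++ u.map pm)).map pm, Letter.pos x, v.map pm⟩ ∧
    DQ.dv (cls ⟨u.map pm, Letter.pos x, v.map pm⟩) (cls q) =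
      cls ⟨u.map pm, Letter.pos x, (hat (v.map pm ++ q.word)).map pm⟩ ∧
    (⟨(hat (q.word ++ u.map pm)).map pm, Letter.pos x, v.map pm⟩ : FD (Letter X)) ∈
      OmegaX X ∧
    (⟨u.map pm, Letter.pos x, (hat (v.map pm ++ q.word)).map pm⟩ : FD (Letter X)) ∈
      OmegaX X :=
  mul_with_OmegaX_general q x u v hu hv
end
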